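/- arXiv:2207.10060 — 2 statements merged into one kernel-verified Lean document; each statement's English description precedes it below -/
import Mathlib

section
/- Let w, w0 ∈ ℂ with w ≠ 2, let l ≥ 1 be an integer, and define P = (1 + w/2)/(1 − w/2) and Q = (1/2)/(1 − w/2). Let V ∈ ℂ and define the sequence Y_0 = V and, for k = 1, …, l, Y_k by (1 − w/2)·Y_k = (1 + w/2)·V + (w0/2)·(Y_{k-1} + V). Then Y_l = R(w,w0)·V, where R(w,w0) = (w0·Q)^l + Σ_{k=0}^{l-1} (w0·Q)^k · (P + w0·Q) = ((w0/2)/(1 − w/2))^l + Σ_{k=0}^{l-1} ((w0/2)/(1 − w/2))^k · (1 + w/2 + w0/2)/(1 − w/2). -/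
/-!
Solving the `k`-th equation for `Y k` turns the scheme into `Y k = (w0 Q) Y (k-1) + (P + w0 Q) V`,
an affine map iterated from `V`: the initial value contributes the power `(w0 Q) ^ l` and the
constant term contributes the geometric sum.
-/

theorem eq_pow_smul_add_sum_pow_smul_of_affine_recurrence {R M : Type*} [Semiring R]
    [AddCommMonoid M] [Module R M] {a : R} {b : M} {y : ℕ → M} {n : ℕ}
    (h : ∀ k < n, y (k + 1) = a • y k + b) :
    y n = a ^ n • y 0 + ∑ k ∈ Finset.range n, a ^ k • b := by
  induction n with
  | zero => simp
  | succ n ih =>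
    calc y (n + 1) = a • y n + b := h n n.lt_succ_self
      _ = a • (a ^ n • y 0 + ∑ k ∈ Finset.range n, a ^ k • b) + b := by
        rw [ih fun k hk ↦ h k (hk.trans n.lt_succ_self)]
      _ = a ^ (n + 1) • y 0 + ∑ k ∈ Finset.range (n + 1), a ^ k • b := by
        simp only [Finset.sum_range_succ', Finset.smul_sum, smul_add, smul_smul, pow_succ',
          pow_zero, one_smul, add_assoc]

/-- In the CNFI scheme, `d = I - (Δt/2) A^(D)`, `e = I + (Δt/2) A^(D)` and `j = (Δt/2) A^(J)`,
where the operators `A^(D)` and `A^(J)` may fail to commute. -/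
theorem eq_pow_add_sum_smul_of_splitting_iteration {R M : Type*} [Semiring R]
    [AddCommMonoid M] [Module R M] (d : Rˣ) {e j : R} {v : M} {y : ℕ → M} {n : ℕ}
    (h0 : y 0 = v) (h : ∀ k < n, (d : R) • y (k + 1) = e • v + j • (y k + v)) :
    y n = ((↑d⁻¹ * j) ^ n +
      ∑ k ∈ Finset.range n, (↑d⁻¹ * j) ^ k * (↑d⁻¹ * e + ↑d⁻¹ * j)) • v := by
  have h_affine : ∀ k < n, y (k + 1) = (↑d⁻¹ * j) • y k + (↑d⁻¹ * e + ↑d⁻¹ * j) • v := by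
    intro k hk
    calc y (k + 1) = (↑d⁻¹ : R) • (d : R) • y (k + 1) := by
          rw [smul_smul, Units.inv_mul, one_smul]
      _ = (↑d⁻¹ : R) • (e • v + j • (y k + v)) := by rw [h k hk]
      _ = (↑d⁻¹ * j) • y k + (↑d⁻¹ * e + ↑d⁻¹ * j) • v := by
        simp only [smul_add, add_smul, mul_smul]
        abel
  rw [eq_pow_smul_add_sum_pow_smul_of_affine_recurrence h_affine, h0]
  simp only [add_smul, Finset.sum_smul, mul_smul, smul_add]

theorem cnfi_stability_function_general {K M : Type*} [Field K] [NeZero (2 : K)]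
    [AddCommGroup M] [Module K M] {w w0 : K} (hw : w ≠ 2) {l : ℕ}
    {P Q : K} (hP : P = (1 + w / 2) / (1 - w / 2)) (hQ : Q = (1 / 2) / (1 - w / 2))
    {V : M} {Y : ℕ → M} (hY0 : Y 0 = V)
    (hY : ∀ k < l, (1 - w / 2) • Y (k + 1) = (1 + w / 2) • V + (w0 / 2) • (Y k + V)) :
    Y l = ((w0 * Q) ^ l + ∑ k ∈ Finset.range l, (w0 * Q) ^ k * (P + w0 * Q)) • V ∧
    (w0 * Q) ^ l + ∑ k ∈ Finset.range l, (w0 * Q) ^ k * (P + w0 * Q)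
      = ((w0 / 2) / (1 - w / 2)) ^ l +
        ∑ k ∈ Finset.range l, ((w0 / 2) / (1 - w / 2)) ^ k *
          ((1 + w / 2 + w0 / 2) / (1 - w / 2)) := by
  have hd : 1 - w / 2 ≠ 0 :=
    sub_ne_zero.2 fun h ↦ hw ((div_eq_one_iff_eq two_ne_zero).1 h.symm)
  have h_ratio : w0 * Q = (w0 / 2) / (1 - w / 2) := by rw [hQ]; ring
  constructor
  · have h_iter := eq_pow_add_sum_smul_of_splitting_iteration (Units.mk0 _ hd) hY0 hY
    simpa only [Units.val_inv_eq_inv_val, Units.val_mk0, inv_mul_eq_div, ← h_ratio, ← hP]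
      using h_iter
  · rw [h_ratio, hP, ← add_div]

open Finset in
/-- Derivation of the stability function of the CNFI scheme: with `w ≠ 2`,
`P = (1 + w/2)/(1 − w/2)`, `Q = (1/2)/(1 − w/2)`, `Y_0 = V` and, for
`k = 1, …, l`, `(1 − w/2)·Y_k = (1 + w/2)·V + (w0/2)·(Y_{k-1} + V)`,
one has `Y_l = R(w,w0)·V`, where
`R(w,w0) = (w0·Q)^l + Σ_{k=0}^{l-1} (w0·Q)^k·(P + w0·Q)
         = ((w0/2)/(1 − w/2))^l + Σ_{k=0}^{l-1} ((w0/2)/(1 − w/2))^k·(1 + w/2 + w0/2)/(1 − w/2)`. -/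
theorem cnfi_stability_function (w w0 : ℂ) (hw : w ≠ 2) (l : ℕ) (hl : 1 ≤ l)
    (P Q : ℂ) (hP : P = (1 + w / 2) / (1 - w / 2)) (hQ : Q = (1 / 2) / (1 - w / 2))
    (V : ℂ) (Y : ℕ → ℂ) (hY0 : Y 0 = V)
    (hYk : ∀ k : ℕ, 1 ≤ k → k ≤ l →
      (1 - w / 2) * Y k = (1 + w / 2) * V + (w0 / 2) * (Y (k - 1) + V)) :
    Y l = ((w0 * Q) ^ l + ∑ k ∈ range l, (w0 * Q) ^ k * (P + w0 * Q)) * V ∧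
    (w0 * Q) ^ l + ∑ k ∈ range l, (w0 * Q) ^ k * (P + w0 * Q)
      = ((w0 / 2) / (1 - w / 2)) ^ l +
        ∑ k ∈ range l, ((w0 / 2) / (1 - w / 2)) ^ k *
          ((1 + w / 2 + w0 / 2) / (1 - w / 2)) :=
  cnfi_stability_function_general hw hP hQ hY0 fun k hk ↦ hYk (k + 1) (Nat.le_add_left 1 k) hk
end

section
/- Let α, β > 0, let 0 ≤ x₀ < x₁ and 0 ≤ y₀ < y₁, and let V₀₀, V₁₀, V₀₁, V₁₁ ∈ ℝ. Set δ = (x₁ − x₀)(y₁ − y₀) and define the bilinear interpolant ṽ(z₁,z₂) = [(x₁ − z₁)(y₁ − z₂)V₀₀ + (z₁ − x₀)(y₁ − z₂)V₁₀ + (x₁ − z₁)(z₂ − y₀)V₀₁ + (z₁ − x₀)(z₂ − y₀)V₁₁]/δ. For i, j ∈ {0,1} define ζ^{ij} = (x₁^{i+α} − x₀^{i+α})(y₁^{j+β} − y₀^{j+β})/((i+α)(j+β)). Then ∫_{y₀}^{y₁} ∫_{x₀}^{x₁} z₁^{α−1} z₂^{β−1} ṽ(z₁,z₂) dz₁ dz₂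 = γ^{00}V₀₀ + γ^{10}V₁₀ + γ^{01}V₀₁ + γ^{11}V₁₁, where γ^{00} = (x₁y₁ζ^{00} − y₁ζ^{10} − x₁ζ^{01} + ζ^{11})/δ, γ^{10} = (−x₀y₁ζ^{00} + y₁ζ^{10} + x₀ζ^{01} − ζ^{11})/δ, γ^{01} = (−x₁y₀ζ^{00} + y₀ζ^{10} + x₁ζ^{01} − ζ^{11})/δ, and γ^{11} = (x₀y₀ζ^{00} − y₀ζ^{10} − x₀ζ^{01} + ζ^{11})/δ. -/
/-! Bilinear interpolation is linear interpolation in `z₁` followed by linear interpolation in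
`z₂`. Against a weight, a linear interpolant integrates to a combination of its two nodal values
whose coefficients involve only the moments of order `0` and `1` of the weight, so each `δ γ^{ij}`
is a product of two such coefficients. -/

open MeasureTheory Set

/-- The moment of order `n` over `a..b` of the weight `f` with respect to `μ`; oriented, like the
interval integral. -/
noncomputable def weightedMoment (f : ℝ → ℝ) (μ : Measure ℝ) (a b : ℝ) (n : ℕ) : ℝ :=
  ∫ x in a..b, f x * x ^ n ∂μ

theorem weightedMoment_rpow {a b r : ℝ} {n : ℕ}
    (h : 0 < n + r ∨ n + r ≠ 0 ∧ (0 : ℝ) ∉ uIcc a b) :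
    weightedMoment (fun x ↦ x ^ (r - 1)) volume a b n =
      (b ^ (n + r) - a ^ (n + r)) / (n + r) := by
  have exponent : r - 1 + n = n + r - 1 := by ring
  have combine_powers : ∀ᵐ x : ℝ, x ∈ uIoc a b → x ^ (r - 1) * x ^ n = x ^ (n + r - 1) := by
    filter_upwards [volume.ae_ne 0] with x hx _
    rw [← Real.rpow_add_natCast hx, exponent]
  have admissible : -1 < n + r - 1 ∨ n + r - 1 ≠ -1 ∧ (0 : ℝ) ∉ uIcc a b :=
    h.imp (fun h ↦ by linarith) (And.imp_left fun h h' ↦ h (by linarith))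
  rw [weightedMoment, intervalIntegral.integral_congr_ae combine_powers,
    integral_rpow admissible, sub_add_cancel]

theorem integral_mul_linear_interpolant {f : ℝ → ℝ} {μ : Measure ℝ} {a b : ℝ}
    (hf : IntervalIntegrable f μ a b) (s t u v : ℝ) :
    ∫ x in a..b, f x * ((t - x) * u + (x - s) * v) ∂μ =
      (t * weightedMoment f μ a b 0 - weightedMoment f μ a b 1) * u +
        (weightedMoment f μ a b 1 - s * weightedMoment f μ a b 0) * v := by
  have integrable (n : ℕ) : IntervalIntegrable (fun x ↦ f x * x ^ n) μ a b :=
    hf.mul_continuousOn (continuous_pow n).continuousOn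
  calc ∫ x in a..b, f x * ((t - x) * u + (x - s) * v) ∂μ
      = ∫ x in a..b, ((t * u - s * v) * (f x * x ^ 0) + (v - u) * (f x * x ^ 1)) ∂μ := by
        congr 1 with x
        ring
    _ = (t * u - s * v) * weightedMoment f μ a b 0 + (v - u) * weightedMoment f μ a b 1 := by
        rw [intervalIntegral.integral_add ((integrable 0).const_mul _) ((integrable 1).const_mul _),
          intervalIntegral.integral_const_mul, intervalIntegral.integral_const_mul]
        rfl
    _ = _ := by ring

theorem integral_mul_bilinear_interpolant {f g : ℝ → ℝ} {μ ν : Measure ℝ} {a b c d : ℝ}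
    (hf : IntervalIntegrable f μ a b) (hg : IntervalIntegrable g ν c d)
    (x0 x1 y0 y1 V00 V10 V01 V11 : ℝ) :
    let M := weightedMoment f μ a b
    let N := weightedMoment g ν c d
    ∫ z2 in c..d, ∫ z1 in a..b, f z1 * g z2 *
        ((x1 - z1) * (y1 - z2) * V00 + (z1 - x0) * (y1 - z2) * V10 +
          (x1 - z1) * (z2 - y0) * V01 + (z1 - x0) * (z2 - y0) * V11) ∂μ ∂ν =
      (x1 * M 0 - M 1) * (y1 * N 0 - N 1) * V00 + (M 1 - x0 * M 0) * (y1 * N 0 - N 1) * V10 +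
        (x1 * M 0 - M 1) * (N 1 - y0 * N 0) * V01 +
        (M 1 - x0 * M 0) * (N 1 - y0 * N 0) * V11 := by
  intro M N
  have inner (z2 : ℝ) : ∫ z1 in a..b, f z1 * g z2 *
        ((x1 - z1) * (y1 - z2) * V00 + (z1 - x0) * (y1 - z2) * V10 +
          (x1 - z1) * (z2 - y0) * V01 + (z1 - x0) * (z2 - y0) * V11) ∂μ =
      g z2 * ((y1 - z2) * ((x1 * M 0 - M 1) * V00 + (M 1 - x0 * M 0) * V10) +
        (z2 - y0) * ((x1 * M 0 - M 1) * V01 + (M 1 - x0 * M 0) * V11)) := by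
    calc _ = ∫ z1 in a..b, f z1 * ((x1 - z1) * (g z2 * ((y1 - z2) * V00 + (z2 - y0) * V01)) +
            (z1 - x0) * (g z2 * ((y1 - z2) * V10 + (z2 - y0) * V11))) ∂μ := by
          congr 1 with z1
          ring
      _ = _ := by
          rw [integral_mul_linear_interpolant hf]
          ring
  simp only [inner]
  rw [integral_mul_linear_interpolant hg]
  ring

theorem bilinear_cell_integral_general {f g : ℝ → ℝ} {μ ν : Measure ℝ} {x0 x1 y0 y1 : ℝ}
    (hf : IntervalIntegrable f μ x0 x1) (hg : IntervalIntegrable g ν y0 y1)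
    (hx : x0 ≠ x1) (hy : y0 ≠ y1) (V00 V10 V01 V11 : ℝ)
    (δ : ℝ) (hδ : δ = (x1 - x0) * (y1 - y0))
    (vt : ℝ → ℝ → ℝ)
    (hvt : ∀ z1 z2 : ℝ, vt z1 z2 =
      ((x1 - z1) * (y1 - z2) * V00 + (z1 - x0) * (y1 - z2) * V10 +
       (x1 - z1) * (z2 - y0) * V01 + (z1 - x0) * (z2 - y0) * V11) / δ)
    (ζ : ℕ → ℕ → ℝ)
    (hζ : ∀ i j : ℕ, i ≤ 1 → j ≤ 1 →
      ζ i j = weightedMoment f μ x0 x1 i * weightedMoment g ν y0 y1 j)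
    (γ00 γ10 γ01 γ11 : ℝ)
    (hγ00 : γ00 = (x1 * y1 * ζ 0 0 - y1 * ζ 1 0 - x1 * ζ 0 1 + ζ 1 1) / δ)
    (hγ10 : γ10 = (-x0 * y1 * ζ 0 0 + y1 * ζ 1 0 + x0 * ζ 0 1 - ζ 1 1) / δ)
    (hγ01 : γ01 = (-x1 * y0 * ζ 0 0 + y0 * ζ 1 0 + x1 * ζ 0 1 - ζ 1 1) / δ)
    (hγ11 : γ11 = (x0 * y0 * ζ 0 0 - y0 * ζ 1 0 - x0 * ζ 0 1 + ζ 1 1) / δ) :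
    ∫ z2 in y0..y1, ∫ z1 in x0..x1, f z1 * g z2 * vt z1 z2 ∂μ ∂ν
      = γ00 * V00 + γ10 * V10 + γ01 * V01 + γ11 * V11 := by
  have δ_ne_zero : δ ≠ 0 := hδ ▸ mul_ne_zero (sub_ne_zero.2 hx.symm) (sub_ne_zero.2 hy.symm)
  simp only [hvt, mul_div_assoc', intervalIntegral.integral_div]
  rw [integral_mul_bilinear_interpolant hf hg, div_eq_iff δ_ne_zero, hγ00, hγ10, hγ01, hγ11,
    hζ 0 0 zero_le_one zero_le_one, hζ 1 0 le_rfl zero_le_one,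
    hζ 0 1 zero_le_one le_rfl, hζ 1 1 le_rfl le_rfl]
  field_simp
  ring

/-- Closed form for the weighted cell integral of a bilinear interpolant:
with `α, β > 0`, `0 ≤ x₀ < x₁`, `0 ≤ y₀ < y₁`, corner values
`V₀₀, V₁₀, V₀₁, V₁₁`, `δ = (x₁ − x₀)(y₁ − y₀)`, bilinear interpolant `ṽ`,
and moments `ζ^{ij} = (x₁^{i+α} − x₀^{i+α})(y₁^{j+β} − y₀^{j+β})/((i+α)(j+β))`,
the integral `∫∫ z₁^{α−1} z₂^{β−1} ṽ(z₁,z₂) dz₁ dz₂` over the cell equals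
`γ^{00}V₀₀ + γ^{10}V₁₀ + γ^{01}V₀₁ + γ^{11}V₁₁` with the stated weights. -/
theorem bilinear_cell_integral (α β : ℝ) (hα : 0 < α) (hβ : 0 < β)
    (x0 x1 y0 y1 : ℝ) (hx0 : 0 ≤ x0) (hx : x0 < x1) (hy0 : 0 ≤ y0) (hy : y0 < y1)
    (V00 V10 V01 V11 : ℝ)
    (δ : ℝ) (hδ : δ = (x1 - x0) * (y1 - y0))
    (vt : ℝ → ℝ → ℝ)
    (hvt : ∀ z1 z2 : ℝ, vt z1 z2 =
      ((x1 - z1) * (y1 - z2) * V00 + (z1 - x0) * (y1 - z2) * V10 +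
       (x1 - z1) * (z2 - y0) * V01 + (z1 - x0) * (z2 - y0) * V11) / δ)
    (ζ : ℕ → ℕ → ℝ)
    (hζ : ∀ i j : ℕ, i ≤ 1 → j ≤ 1 → ζ i j =
      (x1 ^ ((i : ℝ) + α) - x0 ^ ((i : ℝ) + α)) *
      (y1 ^ ((j : ℝ) + β) - y0 ^ ((j : ℝ) + β)) / (((i : ℝ) + α) * ((j : ℝ) + β)))
    (γ00 γ10 γ01 γ11 : ℝ)
    (hγ00 : γ00 = (x1 * y1 * ζ 0 0 - y1 * ζ 1 0 - x1 * ζ 0 1 + ζ 1 1) / δ)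
    (hγ10 : γ10 = (-x0 * y1 * ζ 0 0 + y1 * ζ 1 0 + x0 * ζ 0 1 - ζ 1 1) / δ)
    (hγ01 : γ01 = (-x1 * y0 * ζ 0 0 + y0 * ζ 1 0 + x1 * ζ 0 1 - ζ 1 1) / δ)
    (hγ11 : γ11 = (x0 * y0 * ζ 0 0 - y0 * ζ 1 0 - x0 * ζ 0 1 + ζ 1 1) / δ) :
    ∫ z2 in y0..y1, ∫ z1 in x0..x1, z1 ^ (α - 1) * z2 ^ (β - 1) * vt z1 z2
      = γ00 * V00 + γ10 * V10 + γ01 * V01 + γ11 * V11 := by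
  exact bilinear_cell_integral_general
    (intervalIntegral.intervalIntegrable_rpow' (by linarith))
    (intervalIntegral.intervalIntegrable_rpow' (by linarith)) hx.ne hy.ne _ _ _ _ δ hδ vt hvt ζ
    (fun i j hi hj ↦ by
      rw [hζ i j hi hj, weightedMoment_rpow (.inl (by positivity)),
        weightedMoment_rpow (.inl (by positivity)), div_mul_div_comm])
    _ _ _ _ hγ00 hγ10 hγ01 hγ11
end
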